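/- arXiv:1310.0838 — 2 statements merged into one kernel-verified Lean document; each statement's English description precedes it below -/
import Mathlib

section
/- Let A be a finite antichain (a finite poset in which no two distinct elements are comparable) and G a finite group acting on A, and let p be the polynomial with p(n) = |Hom(A,[n])/G| for all integers n ≥ 1. Then for all integers n ≥ 1, p(-n) = (-1)^{|A|} · |Hom_+(A,[n])/G|, the number of G-orbits of even maps A → [n], up to sign. -/
/-!
By Burnside's lemma, `|Hom(A,[n])/G|` is the average over `g ∈ G` of `n ^ c(g)`, where `c(g)` is the
number of cycles of `g` on `A`; this determines `p`. Since `(-1) ^ c(g) = (-1) ^ |A| * sgn(g)`,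
replacing `n` by `-n` inserts the character `sgn` into the average. Such a twisted average still
counts orbits: grouped by points, a point `x` contributes the sum of `sgn` over `Stab(x)`, which is
`|Stab(x)|` if `sgn` is trivial there and `0` otherwise, so only the even orbits survive.
-/

open MulAction Polynomial

theorem eq_of_forall_eval_natCast_eq {R : Type*} [CommRing R] [IsDomain R] [CharZero R]
    {p q : R[X]} (N : ℕ) (h : ∀ n : ℕ, N ≤ n → p.eval (n : R) = q.eval (n : R)) : p = q :=
  eq_of_infinite_eval_eq p q <|
    ((Set.Ici_infinite N).image Nat.cast_injective.injOn).mono (Set.image_subset_iff.2 h)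

section TwistedBurnside

variable {G : Type*} [Group G] (X : Type*) [MulAction G X]

/-- The `G`-stable set of points of `X` on whose stabilizer `χ` is trivial. When `χ` is the sign
character of an action on `A` and `X = Hom(A,[n])`, this is the set `Hom₊(A,[n])` of even maps. -/
def evenPoints {M : Type*} [Monoid M] (χ : G →* M) : SubMulAction G X where
  carrier := {x | ∀ g ∈ stabilizer G x, χ g = 1}
  smul_mem' k x hx g hg := by
    have hconj : k⁻¹ * g * k ∈ stabilizer G x := by
      rw [mem_stabilizer_iff, mul_smul, mul_smul, mem_stabilizer_iff.1 hg, inv_smul_smul]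
    calc χ g = χ (k * (k⁻¹ * g * k) * k⁻¹) := by congr 1; group
      _ = 1 := by rw [map_mul, map_mul, hx _ hconj, mul_one, ← map_mul, mul_inv_cancel, map_one]

variable {X}

theorem mem_evenPoints {M : Type*} [Monoid M] {χ : G →* M} {x : X} :
    x ∈ evenPoints X χ ↔ ∀ g : G, g • x = x → χ g = 1 :=
  Iff.rfl

open Classical in
theorem sum_stabilizer_eq_ite [Fintype G] {R : Type*} [CommRing R] [IsDomain R] (χ : G →* R)
    (x : X) :
    ∑ g : stabilizer G x, χ g =
      if x ∈ evenPoints X χ then (Nat.card (stabilizer G x) : R) else 0 := by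
  have htrivial : χ.comp (stabilizer G x).subtype = 1 ↔ x ∈ evenPoints X χ := by
    simp [MonoidHom.ext_iff, mem_evenPoints]
  simpa [htrivial, Nat.card_eq_fintype_card] using sum_hom_units (χ.comp (stabilizer G x).subtype)

open Classical in
theorem sum_mul_card_fixedBy_eq_sum_stabilizer [Fintype G] [Fintype X] {R : Type*}
    [Semiring R] (w : G → R) :
    ∑ g : G, w g * Nat.card (fixedBy X g) = ∑ x : X, ∑ g : stabilizer G x, w g := by
  have hfixed (g : G) : w g * Nat.card (fixedBy X g) = ∑ x : X, if g • x = x then w g else 0 := by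
    simp [← Finset.sum_filter, Nat.card_eq_fintype_card, Fintype.card_subtype, Nat.cast_comm]
  have hstab (x : X) : ∑ g : stabilizer G x, w g = ∑ g : G, if g • x = x then w g else 0 := by
    rw [← Finset.sum_filter]
    exact (Finset.sum_subtype _ (by simp) w).symm
  simp_rw [hfixed, hstab]
  exact Finset.sum_comm

theorem sum_natCard_fixedBy [Fintype G] [Finite X] :
    ∑ g : G, Nat.card (fixedBy X g) = Nat.card (orbitRel.Quotient G X) * Nat.card G := by
  classical
  have := Fintype.ofFinite X
  simpa only [Nat.card_eq_fintype_card] using sum_card_fixedBy_eq_card_orbits_mul_card_group G X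

theorem sum_natCard_stabilizer [Finite G] [Fintype X] :
    ∑ x : X, Nat.card (stabilizer G x) = Nat.card (orbitRel.Quotient G X) * Nat.card G := by
  classical
  have := Fintype.ofFinite G
  have hcount := sum_mul_card_fixedBy_eq_sum_stabilizer (X := X) fun _ : G => (1 : ℕ)
  simp only [one_mul, Nat.cast_id, Finset.sum_const, Finset.card_univ, smul_eq_mul, mul_one,
    ← Nat.card_eq_fintype_card] at hcount
  rw [← hcount, sum_natCard_fixedBy]

theorem sum_mul_card_fixedBy [Fintype G] [Finite X] {R : Type*} [CommRing R] [IsDomain R]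
    (χ : G →* R) :
    ∑ g : G, χ g * Nat.card (fixedBy X g) =
      Nat.card (orbitRel.Quotient G (evenPoints X χ)) * Nat.card G := by
  classical
  have := Fintype.ofFinite X
  calc ∑ g : G, χ g * Nat.card (fixedBy X g)
      = ∑ x : X, if x ∈ evenPoints X χ then (Nat.card (stabilizer G x) : R) else 0 := by
        simp_rw [sum_mul_card_fixedBy_eq_sum_stabilizer, sum_stabilizer_eq_ite]
    _ = ∑ x : evenPoints X χ, (Nat.card (stabilizer G x) : R) := by
        simp_rw [SubMulAction.stabilizer_of_subMul]
        rw [← Finset.sum_filter]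
        exact Finset.sum_subtype _ (by simp) _
    _ = Nat.card (orbitRel.Quotient G (evenPoints X χ)) * Nat.card G := by
        exact_mod_cast congrArg (Nat.cast (R := R)) sum_natCard_stabilizer

end TwistedBurnside

section Cycles

variable {A : Type*}

/-- The number of cycles of a permutation, fixed points included; `0` if there are infinitely
many. -/
noncomputable def numCycles (σ : Equiv.Perm A) : ℕ :=
  Nat.card (Quotient (Equiv.Perm.SameCycle.setoid σ))

variable [Fintype A] [DecidableEq A] (σ : Equiv.Perm A)

/-- The cycle through a point: a nontrivial cycle factor of `σ` or, since `cycleFactorsFinset`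
omits the trivial cycles, a fixed point. -/
def cycleThrough (x : A) : σ.cycleFactorsFinset ⊕ Function.fixedPoints σ :=
  if h : σ x = x then .inr ⟨x, h⟩
  else .inl ⟨σ.cycleOf x, Equiv.Perm.cycleOf_mem_cycleFactorsFinset_iff.2 (by simpa using h)⟩

theorem cycleThrough_eq_iff {x y : A} :
    cycleThrough σ x = cycleThrough σ y ↔ σ.SameCycle x y := by
  by_cases hx : σ x = x <;> by_cases hy : σ y = y
  · simp only [cycleThrough, hx, hy, dite_true, Sum.inr.injEq]
    exact Subtype.mk_eq_mk.trans ⟨fun h => h ▸ .refl σ x, fun h => h.eq_of_left hx⟩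
  · simpa [cycleThrough, hx, hy] using
      fun h : σ.SameCycle x y => hy (h.apply_eq_self_iff.1 hx)
  · simpa [cycleThrough, hx, hy] using
      fun h : σ.SameCycle x y => hx (h.apply_eq_self_iff.2 hy)
  · simpa [cycleThrough, hx, hy] using
      (Equiv.Perm.sameCycle_iff_cycleOf_eq_of_mem_support (by simpa using hx)
        (by simpa using hy)).symm

theorem cycleThrough_surjective : Function.Surjective (cycleThrough σ) := by
  rintro (⟨c, hc⟩ | ⟨x, hx⟩)
  · obtain ⟨x, hx⟩ := (Equiv.Perm.mem_cycleFactorsFinset_iff.1 hc).1.nonempty_support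
    have hσx : σ x ≠ x :=
      Equiv.Perm.mem_support.1 (Equiv.Perm.mem_cycleFactorsFinset_support_le hc hx)
    exact ⟨x, by simp [cycleThrough, hσx, Equiv.Perm.cycle_is_cycleOf hx hc]⟩
  · exact ⟨x, dif_pos hx⟩

theorem numCycles_eq_card_cycleType_add :
    numCycles σ = Multiset.card σ.cycleType + (Fintype.card A - σ.cycleType.sum) := by
  have hker : Equiv.Perm.SameCycle.setoid σ = Setoid.ker (cycleThrough σ) :=
    Setoid.ext fun _ _ => (cycleThrough_eq_iff σ).symm
  rw [numCycles, hker,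
    Nat.card_congr (Setoid.quotientKerEquivOfSurjective _ (cycleThrough_surjective σ)),
    Nat.card_sum, Nat.card_eq_fintype_card, Nat.card_eq_fintype_card, σ.card_fixedPoints,
    Fintype.card_coe, Equiv.Perm.cycleType_def, Multiset.card_map, Finset.card_val]

theorem neg_one_pow_numCycles :
    (-1 : ℤ) ^ numCycles σ = (-1) ^ Fintype.card A * Equiv.Perm.sign σ := by
  have hparity : Fintype.card A + (σ.cycleType.sum + Multiset.card σ.cycleType) =
      numCycles σ + 2 * σ.cycleType.sum := by
    have := σ.sum_cycleType_le
    have := numCycles_eq_card_cycleType_add σ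
    lia
  rw [Equiv.Perm.sign_of_cycleType]
  push_cast
  rw [← pow_add, hparity, pow_add, pow_mul, neg_one_sq, one_pow, mul_one]

end Cycles

section Colorings

attribute [local instance] arrowAction

variable {G A B : Type*} [Group G] [MulAction G A]

theorem mem_fixedBy_arrow_iff {g : G} {f : A → B} :
    f ∈ fixedBy (A → B) g ↔ ∀ x, f (g⁻¹ • x) = f x :=
  funext_iff

theorem mem_fixedBy_arrow_iff_sameCycle_le_ker {g : G} {f : A → B} :
    f ∈ fixedBy (A → B) g ↔
      Equiv.Perm.SameCycle.setoid (toPerm g : Equiv.Perm A) ≤ Setoid.ker f := by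
  constructor
  · rintro hf x - ⟨i, rfl⟩
    have hpow : (toPerm g : Equiv.Perm A) ^ i = toPerm (g ^ i) :=
      (map_zpow (toPermHom G A) g i).symm
    have hinv := mem_fixedBy_arrow_iff.1 (mem_fixedBy_zpow hf (-i)) x
    rw [hpow, Setoid.ker_def, toPerm_apply, ← hinv, zpow_neg, inv_inv]
  · intro hf
    rw [← fixedBy_inv, mem_fixedBy_arrow_iff]
    intro x
    rw [inv_inv]
    exact (hf (Equiv.Perm.SameCycle.refl _ x).apply_right).symm

theorem card_fixedBy_arrow [Finite A] (g : G) :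
    Nat.card (fixedBy (A → B) g) = Nat.card B ^ numCycles (toPerm g : Equiv.Perm A) := by
  have e : fixedBy (A → B) g ≃
      (Quotient (Equiv.Perm.SameCycle.setoid (toPerm g : Equiv.Perm A)) → B) :=
    (Equiv.subtypeEquivRight fun _ => mem_fixedBy_arrow_iff_sameCycle_le_ker).trans
      (Setoid.liftEquiv _)
  rw [Nat.card_congr e, Nat.card_fun, numCycles]

theorem card_quot_arrow :
    Nat.card (Quot fun f h : A → B => ∃ g : G, ∀ x, h x = f (g⁻¹ • x)) =
      Nat.card (orbitRel.Quotient G (A → B)) := by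
  refine Nat.card_congr (Quot.congrRight fun f h => ?_)
  change _ ↔ f ∈ orbit G h
  rw [mem_orbit_symm]
  exact exists_congr fun g => funext_iff.symm.trans eq_comm

variable (G A) in
/-- The polynomial whose value at `n` is the number of `G`-orbits of maps `A → [n]`. -/
noncomputable def orbitPolynomial [Fintype G] : ℚ[X] :=
  C (Nat.card G : ℚ)⁻¹ * ∑ g : G, X ^ numCycles (toPerm g : Equiv.Perm A)

theorem eval_orbitPolynomial [Fintype G] [Finite A] [Finite B] :
    (orbitPolynomial G A).eval (Nat.card B : ℚ) = Nat.card (orbitRel.Quotient G (A → B)) := by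
  have hburnside := sum_natCard_fixedBy (G := G) (X := A → B)
  simp_rw [card_fixedBy_arrow] at hburnside
  rw [orbitPolynomial, eval_mul, eval_C, eval_finsetSum, inv_mul_eq_iff_eq_mul₀ (by simp),
    mul_comm]
  simp_rw [eval_X_pow]
  exact_mod_cast hburnside

section Even

variable [Fintype A] [DecidableEq A]

variable (G A) in
/-- The sign of `g` as a permutation of `A`, as a character with values in `ℤ` so that it can be
summed over `G`. -/
def signCharacter : G →* ℤ :=
  (Units.coeHom ℤ).comp (Equiv.Perm.sign.comp (toPermHom G A))

theorem signCharacter_apply (g : G) :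
    signCharacter G A g = Equiv.Perm.sign (toPerm g : Equiv.Perm A) :=
  rfl

theorem mem_evenPoints_signCharacter {f : A → B} :
    f ∈ evenPoints (A → B) (signCharacter G A) ↔ ∀ g : G, (∀ x, f (g⁻¹ • x) = f x) →
      Equiv.Perm.sign (toPerm g : Equiv.Perm A) = 1 :=
  forall_congr' fun _ => imp_congr mem_fixedBy_arrow_iff Units.val_eq_one

theorem card_quot_even_arrow :
    Nat.card (Quot fun f h : {f : A → B // ∀ g : G, (∀ x, f (g⁻¹ • x) = f x) →
        Equiv.Perm.sign (toPerm g : Equiv.Perm A) = 1} => ∃ g : G, ∀ x, h.1 x = f.1 (g⁻¹ • x)) =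
      Nat.card (orbitRel.Quotient G (evenPoints (A → B) (signCharacter G A))) := by
  refine Nat.card_congr (Quot.congr
    (Equiv.subtypeEquivRight fun _ => mem_evenPoints_signCharacter.symm) fun f h => ?_)
  change _ ↔ _ ∈ orbit G _
  rw [mem_orbit_symm]
  exact exists_congr fun g =>
    ⟨fun hx => Subtype.ext (funext hx).symm,
      fun hx => congrFun (congrArg Subtype.val hx).symm⟩

theorem eval_neg_orbitPolynomial [Fintype G] [Finite B] :
    (orbitPolynomial G A).eval (-(Nat.card B : ℚ)) = (-1) ^ Fintype.card A *
      Nat.card (orbitRel.Quotient G (evenPoints (A → B) (signCharacter G A))) := by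
  have hneg (g : G) : (-(Nat.card B : ℤ)) ^ numCycles (toPerm g : Equiv.Perm A) =
      (-1) ^ Fintype.card A * (signCharacter G A g * Nat.card (fixedBy (A → B) g)) := by
    rw [neg_pow, neg_one_pow_numCycles, card_fixedBy_arrow, signCharacter_apply, Nat.cast_pow,
      mul_assoc]
  have hsum : ∑ g : G, (-(Nat.card B : ℤ)) ^ numCycles (toPerm g : Equiv.Perm A) =
      (-1) ^ Fintype.card A * (Nat.card (orbitRel.Quotient G
        (evenPoints (A → B) (signCharacter G A))) * Nat.card G) := by
    simp_rw [hneg, ← Finset.mul_sum, sum_mul_card_fixedBy]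
  rw [orbitPolynomial, eval_mul, eval_C, eval_finsetSum, inv_mul_eq_iff_eq_mul₀ (by simp),
    mul_comm, mul_assoc]
  simp_rw [eval_X_pow]
  exact_mod_cast hsum

end Even

end Colorings

/-- Let `A` be a finite antichain (a finite poset in which no two
distinct elements are comparable) and `G` a finite group acting on `A`, and let `p` be
the polynomial with `p(n) = |Hom(A,[n])/G|` for all integers `n ≥ 1`, where `Hom(A,[n])`
is the set of all maps `A → [n]`.  Then for all integers `n ≥ 1` we have
`p(-n) = (-1)^{|A|} · |Hom₊(A,[n])/G|`, the number of `G`-orbits of even maps `A → [n]`,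
up to sign.  (A map `φ` is even if every `g ∈ G` fixing `φ` has sign `+1` as a
permutation of `A`.) -/
theorem stmt_11 {A G : Type*} [PartialOrder A] [Fintype A] [DecidableEq A]
    [Group G] [Fintype G] [MulAction G A]
    (hact : ∀ (g : G) (p q : A), p < q → g • p < g • q)
    (hA : ∀ a b : A, a ≤ b → a = b)
    (p : Polynomial ℚ)
    (hp : ∀ n : ℕ, 1 ≤ n →
      p.eval (n : ℚ) =
        Nat.card (Quot (fun f h : A → Fin n => ∃ g : G, ∀ x : A, h x = f (g⁻¹ • x))))
    (n : ℕ) (hn : 1 ≤ n) :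
    p.eval (-(n : ℚ)) = (-1) ^ (Fintype.card A) *
      Nat.card (Quot (fun f h : {f : A → Fin n //
          ∀ g : G, (∀ x : A, f (g⁻¹ • x) = f x) →
            Equiv.Perm.sign (MulAction.toPerm g : Equiv.Perm A) = 1} =>
        ∃ g : G, ∀ x : A, h.1 x = f.1 (g⁻¹ • x))) := by
  have hpoly : p = orbitPolynomial G A := eq_of_forall_eval_natCast_eq 1 fun m hm => by
    rw [hp m hm, card_quot_arrow, ← eval_orbitPolynomial, Nat.card_fin]
  rw [hpoly, card_quot_even_arrow, ← eval_neg_orbitPolynomial, Nat.card_fin]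
end

section
/- Let Γ be a finite simple graph and G a finite group acting on Γ by automorphisms. Then for all n ≥ 1, the number of G-orbits of proper n-colorings satisfies χ_{Γ,G}(n) = |Col_n(Γ)/G| = (1/|G|) · Σ_{g∈G} Σ_{σ∈Σ^g} Ω°_{Γ^σ_g}(n), where the inner sum ranges over the acyclic orientations of Γ fixed by g. In particular, χ_{Γ,G}(n) agrees for all n ≥ 1 with a polynomial of degree |V|. -/
/-- An orientation of a simple graph `Γ`: an assignment of a head vertex to every edge,
which is a vertex of that edge. -/
def GraphOri {V : Type*} (Γ : SimpleGraph V) : Type _ :=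
  {σ : Γ.edgeSet → V // ∀ e : Γ.edgeSet, σ e ∈ (e : Sym2 V)}

/-- The directed adjacency relation induced by an orientation: `u → v` iff `uv` is an
edge with head `v`. -/
def dirAdj {V : Type*} (Γ : SimpleGraph V) (σ : GraphOri Γ) (u v : V) : Prop :=
  ∃ h : Γ.Adj u v, σ.1 ⟨s(u, v), Γ.mem_edgeSet.mpr h⟩ = v

/-- An orientation is acyclic if it has no directed cycles, i.e. no vertex admits a
nonempty directed path back to itself. -/
def oriAcyclic {V : Type*} (Γ : SimpleGraph V) (σ : GraphOri Γ) : Prop :=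
  ∀ v : V, ¬ Relation.TransGen (dirAdj Γ σ) v v

/-- `oriSMulEq Γ hact g σ σ'` says that `σ' = g • σ`, where `(g • σ)(uv) = g • σ(g⁻¹ • uv)`.
In particular `oriSMulEq Γ hact g σ σ` says that `σ` is fixed by `g`. -/
def oriSMulEq {V G : Type*} [Group G] [MulAction G V] (Γ : SimpleGraph V)
    (hact : ∀ (g : G) (u v : V), Γ.Adj u v → Γ.Adj (g • u) (g • v))
    (g : G) (σ σ' : GraphOri Γ) : Prop :=
  ∀ (u v : V) (h : Γ.Adj u v),
    σ'.1 ⟨s(u, v), Γ.mem_edgeSet.mpr h⟩ =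
      g • σ.1 ⟨s(g⁻¹ • u, g⁻¹ • v), Γ.mem_edgeSet.mpr (hact g⁻¹ u v h)⟩

/-- A coloring `c` and an orientation `σ` are weakly compatible if every edge `uv` with
`c(u) < c(v)` is oriented towards `v`. -/
def weakCompat {V : Type*} (Γ : SimpleGraph V) {n : ℕ} (c : V → Fin n)
    (σ : GraphOri Γ) : Prop :=
  ∀ (u v : V) (h : Γ.Adj u v), c u < c v → σ.1 ⟨s(u, v), Γ.mem_edgeSet.mpr h⟩ = v

/- quotient poset relation for Γ^σ_g -/
def quotDirRel {V G : Type*} [Group G] [MulAction G V] (Γ : SimpleGraph V)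
    (g : G) (σ : GraphOri Γ)
    (a b : Quotient (MulAction.orbitRel (Subgroup.zpowers g) V)) : Prop :=
  ∃ u v : V, Quotient.mk (MulAction.orbitRel (Subgroup.zpowers g) V) u = a ∧
    Quotient.mk (MulAction.orbitRel (Subgroup.zpowers g) V) v = b ∧
    Relation.TransGen (dirAdj Γ σ) u v

/-!
By Burnside's lemma it suffices to count the proper colorings fixed by each `g ∈ G` in two ways.
A proper coloring `c` increases along the directed edges of exactly one orientation `σ`, which is
acyclic; if `c` is fixed by `g`, then so is `σ` by uniqueness, and `c` is a strictly order
preserving map on `Γ^σ_g`. On the other hand, sorting the fixed colorings by their kernel writes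
their number as a sum of falling factorials in `n`, one for each partition of `V` into independent
sets that are unions of `⟨g⟩`-orbits; the degree `|V|` is reached only by the discrete partition,
which occurs for `g = 1`.
-/

open MulAction Polynomial

attribute [local instance] arrowAction

section Orbits

theorem card_orbits_eq_inv_mul_sum_card_fixedBy (K G X : Type*) [Field K] [CharZero K]
    [Group G] [Fintype G] [MulAction G X] [Finite X] :
    (Nat.card (orbitRel.Quotient G X) : K) =
      (Fintype.card G : K)⁻¹ * ∑ g : G, (Nat.card (fixedBy X g) : K) := by
  classical
  have := Fintype.ofFinite X
  have burnside := sum_card_fixedBy_eq_card_orbits_mul_card_group G X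
  simp only [← Nat.card_eq_fintype_card (α := fixedBy _ _),
    ← Nat.card_eq_fintype_card (α := Quotient _)] at burnside
  rw [eq_inv_mul_iff_mul_eq₀ (Nat.cast_ne_zero.mpr Fintype.card_ne_zero), mul_comm]
  exact_mod_cast burnside.symm

theorem mem_fixedBy_iff_orbitRel_zpowers_le_ker {G V C : Type*} [Group G] [MulAction G V]
    {g : G} {c : V → C} :
    c ∈ fixedBy (V → C) g ↔ orbitRel (Subgroup.zpowers g) V ≤ Setoid.ker c := by
  constructor
  · rintro hc _ v ⟨⟨k, hk⟩, rfl⟩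
    have hk_inv : k⁻¹ ∈ stabilizer G c :=
      inv_mem (Subgroup.zpowers_le.mpr (mem_stabilizer_iff.mpr hc) hk)
    have smul_eq : c (k⁻¹⁻¹ • v) = c v := congrFun (mem_stabilizer_iff.mp hk_inv) v
    rwa [inv_inv] at smul_eq
  · exact fun hc => funext fun v => hc ⟨⟨g⁻¹, inv_mem (Subgroup.mem_zpowers g)⟩, rfl⟩

end Orbits

section ProperColorings

variable {V G : Type*} [Group G] [MulAction G V] (Γ : SimpleGraph V)
  (hact : ∀ (g : G) (u v : V), Γ.Adj u v → Γ.Adj (g • u) (g • v)) (C : Type*)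

/-- The `G`-set of proper colorings of `Γ` with colors in `C`, on which `G` acts by
`(g • c) v = c (g⁻¹ • v)`. -/
def properColorings : SubMulAction G (V → C) where
  carrier := {c | ∀ u v, Γ.Adj u v → c u ≠ c v}
  smul_mem' g _ hc u v huv := hc _ _ (hact g⁻¹ u v huv)

variable {Γ hact C}

theorem mem_fixedBy_properColorings {g : G} {c : properColorings Γ hact C} :
    c ∈ fixedBy (properColorings Γ hact C) g ↔ c.1 ∈ fixedBy (V → C) g :=
  Subtype.ext_iff

theorem orbitRel_properColorings_iff {c c' : properColorings Γ hact C} :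
    orbitRel G (properColorings Γ hact C) c c' ↔ ∃ g : G, ∀ v, c'.1 v = c.1 (g⁻¹ • v) := by
  rw [(orbitRel G (properColorings Γ hact C)).comm', orbitRel_apply]
  exact exists_congr fun g => ⟨fun h v => congrFun (congrArg Subtype.val h.symm) v,
    fun h => Subtype.ext (funext fun v => (h v).symm)⟩

variable (hact C) in
theorem card_quot_properColorings :
    Nat.card (Quot fun c c' : {c : V → C // ∀ u v, Γ.Adj u v → c u ≠ c v} =>
      ∃ g : G, ∀ v, c'.1 v = c.1 (g⁻¹ • v)) =
      Nat.card (orbitRel.Quotient G (properColorings Γ hact C)) :=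
  Nat.card_congr (Quot.congrRight fun _ _ => orbitRel_properColorings_iff.symm)

end ProperColorings

section Orientations

variable {V : Type*} {Γ : SimpleGraph V} {σ σ' : GraphOri Γ}

instance GraphOri.finite [Finite V] : Finite (GraphOri Γ) :=
  inferInstanceAs (Finite {σ : Γ.edgeSet → V // ∀ e : Γ.edgeSet, σ e ∈ (e : Sym2 V)})

theorem GraphOri.dirAdj_or_dirAdj (σ : GraphOri Γ) {u v : V} (h : Γ.Adj u v) :
    dirAdj Γ σ u v ∨ dirAdj Γ σ v u := by
  rcases Sym2.mem_iff.mp (σ.2 ⟨s(u, v), h⟩) with head_eq | head_eq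
  · exact .inr ⟨h.symm, by simpa only [Sym2.eq_swap] using head_eq⟩
  · exact .inl ⟨h, head_eq⟩

theorem dirAdj.head_eq {u v : V} (h : dirAdj Γ σ u v) {e : Γ.edgeSet}
    (he : (e : Sym2 V) = s(u, v)) : σ.1 e = v := by
  obtain ⟨_, head⟩ := h
  rwa [show e = ⟨s(u, v), _⟩ from Subtype.ext he]

theorem GraphOri.ext_dirAdj (h : ∀ u v, dirAdj Γ σ u v → dirAdj Γ σ' u v) : σ = σ' := by
  refine Subtype.ext (funext fun ⟨e, he⟩ => ?_)
  induction e with | _ u v => ?_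
  rcases σ.dirAdj_or_dirAdj he with huv | hvu
  · exact (huv.head_eq rfl).trans ((h _ _ huv).head_eq rfl).symm
  · exact (hvu.head_eq Sym2.eq_swap).trans ((h _ _ hvu).head_eq Sym2.eq_swap).symm

theorem oriSMulEq_of_dirAdj {G : Type*} [Group G] [MulAction G V]
    {hact : ∀ (g : G) (u v : V), Γ.Adj u v → Γ.Adj (g • u) (g • v)} {g : G}
    (h : ∀ u v, dirAdj Γ σ u v → dirAdj Γ σ' (g • u) (g • v)) : oriSMulEq Γ hact g σ σ' := by
  intro u v huv
  rcases σ.dirAdj_or_dirAdj (hact g⁻¹ u v huv) with hσ | hσ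
  · rw [hσ.head_eq rfl, (h _ _ hσ).head_eq (by simp only [smul_inv_smul])]
  · rw [hσ.head_eq Sym2.eq_swap,
      (h _ _ hσ).head_eq (by simp only [smul_inv_smul, Sym2.eq_swap])]

end Orientations

section StrictCompat

variable {V C : Type*} {Γ : SimpleGraph V} {σ σ' : GraphOri Γ} {c : V → C}

variable (Γ σ c) in
/-- A coloring `c` is strictly compatible with an orientation `σ` if it increases along every
directed edge of `σ`; equivalently, `c` is a strictly order preserving map on the poset `Γ^σ`. -/
def StrictCompat [LT C] : Prop :=
  ∀ u v, dirAdj Γ σ u v → c u < c v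

namespace StrictCompat

section Preorder

variable [Preorder C]

theorem ne_of_adj (h : StrictCompat Γ σ c) (u v : V) (huv : Γ.Adj u v) : c u ≠ c v :=
  (σ.dirAdj_or_dirAdj huv).elim (fun huv => (h u v huv).ne) fun hvu => (h v u hvu).ne'

theorem lt_of_transGen (h : StrictCompat Γ σ c) {u v : V}
    (huv : Relation.TransGen (dirAdj Γ σ) u v) : c u < c v :=
  Relation.transGen_minimal (r' := InvImage (· < ·) c) h u v huv

theorem oriAcyclic (h : StrictCompat Γ σ c) : oriAcyclic Γ σ :=
  fun _ cycle => (h.lt_of_transGen cycle).false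

theorem dirAdj_of_lt (h : StrictCompat Γ σ c) {u v : V} (huv : Γ.Adj u v) (hlt : c u < c v) :
    dirAdj Γ σ u v :=
  (σ.dirAdj_or_dirAdj huv).resolve_right fun hvu => hlt.asymm (h v u hvu)

theorem unique (h : StrictCompat Γ σ c) (h' : StrictCompat Γ σ' c) : σ = σ' :=
  GraphOri.ext_dirAdj fun u v huv => h'.dirAdj_of_lt huv.1 (h u v huv)

theorem oriSMulEq {G : Type*} [Group G] [MulAction G V]
    {hact : ∀ (g : G) (u v : V), Γ.Adj u v → Γ.Adj (g • u) (g • v)} {g : G}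
    (h : StrictCompat Γ σ c) (h' : StrictCompat Γ σ' (g • c)) : oriSMulEq Γ hact g σ σ' :=
  have smul_apply_smul (v : V) : (g • c) (g • v) = c v := congrArg c (inv_smul_smul g v)
  oriSMulEq_of_dirAdj fun u v huv => h'.dirAdj_of_lt (hact g u v huv.1) <| by
    simpa only [smul_apply_smul] using h u v huv

end Preorder

end StrictCompat

theorem exists_strictCompat [LinearOrder C] (hc : ∀ u v, Γ.Adj u v → c u ≠ c v) :
    ∃ σ, StrictCompat Γ σ c := by
  have exists_max (e : Γ.edgeSet) : ∃ v ∈ (e : Sym2 V), ∀ u ∈ (e : Sym2 V), c u ≤ c v := by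
    obtain ⟨e, _⟩ := e
    induction e with | _ u v => ?_
    rcases le_total (c u) (c v) with h | h
    · exact ⟨v, Sym2.mem_mk_right u v, by simp [h]⟩
    · exact ⟨u, Sym2.mem_mk_left u v, by simp [h]⟩
  choose head head_mem le_head using exists_max
  refine ⟨⟨head, head_mem⟩, fun u v ⟨huv, head_eq⟩ => (hc u v huv).lt_of_le ?_⟩
  exact head_eq ▸ le_head ⟨s(u, v), huv⟩ u (Sym2.mem_mk_left u v)

end StrictCompat

section FixedColorings

variable {V G C : Type*} [Group G] [MulAction G V] {Γ : SimpleGraph V} {g : G} {σ : GraphOri Γ}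

theorem forall_quotDirRel_lt_iff_strictCompat [Preorder C]
    {ψ : Quotient (orbitRel (Subgroup.zpowers g) V) → C} :
    (∀ a b, quotDirRel Γ g σ a b → ψ a < ψ b) ↔ StrictCompat Γ σ (ψ ∘ Quotient.mk _) := by
  constructor
  · exact fun hψ u v huv => hψ _ _ ⟨u, v, rfl, rfl, .single huv⟩
  · rintro hψ _ _ ⟨u, v, rfl, rfl, huv⟩
    exact hψ.lt_of_transGen huv

/-- The colorings strictly compatible with `σ` that are constant on the orbits of `⟨g⟩` are the
strictly order preserving maps on the quotient poset `Γ^σ_g`. -/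
def fixedStrictCompatEquivStrictMap [Preorder C] (g : G) (σ : GraphOri Γ) :
    {c : V → C // c ∈ fixedBy (V → C) g ∧ StrictCompat Γ σ c} ≃
      {ψ : Quotient (orbitRel (Subgroup.zpowers g) V) → C //
        ∀ a b, quotDirRel Γ g σ a b → ψ a < ψ b} :=
  calc
    _ ≃ {c : V → C // orbitRel (Subgroup.zpowers g) V ≤ Setoid.ker c ∧ StrictCompat Γ σ c} :=
      Equiv.subtypeEquivRight fun _ =>
        and_congr_left fun _ => mem_fixedBy_iff_orbitRel_zpowers_le_ker
    _ ≃ {c : {c : V → C // orbitRel (Subgroup.zpowers g) V ≤ Setoid.ker c} //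
          StrictCompat Γ σ c.1} :=
      (Equiv.subtypeSubtypeEquivSubtypeInter (_ ≤ Setoid.ker ·) (StrictCompat Γ σ ·)).symm
    _ ≃ _ :=
      (Setoid.liftEquiv _).subtypeEquiv fun c =>
        (forall_quotDirRel_lt_iff_strictCompat (ψ := Setoid.liftEquiv _ c)).symm

variable {hact : ∀ (g : G) (u v : V), Γ.Adj u v → Γ.Adj (g • u) (g • v)}

variable (C hact g) in
/-- Forgets the orientation with which a `g`-fixed coloring is strictly compatible. -/
def fixedColoringOfStrictCompat [Preorder C] :
    (Σ σ : {σ : GraphOri Γ // oriAcyclic Γ σ ∧ oriSMulEq Γ hact g σ σ},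
      {c : V → C // c ∈ fixedBy (V → C) g ∧ StrictCompat Γ σ.1 c}) →
    fixedBy (properColorings Γ hact C) g :=
  fun ⟨_, c, hc, hσ⟩ => ⟨⟨c, hσ.ne_of_adj⟩, mem_fixedBy_properColorings.mpr hc⟩

theorem fixedColoringOfStrictCompat_bijective [LinearOrder C] :
    (fixedColoringOfStrictCompat C g hact).Bijective := by
  constructor
  · rintro ⟨⟨σ, _⟩, c, _, hσ⟩ ⟨⟨σ', _⟩, c', _, hσ'⟩ h
    obtain rfl : c = c' := congrArg (fun x => x.1.1) h
    obtain rfl : σ = σ' := hσ.unique hσ'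
    rfl
  · rintro ⟨⟨c, proper⟩, fixed⟩
    have hc : g • c = c := mem_fixedBy_properColorings.mp fixed
    obtain ⟨σ, hσ⟩ := exists_strictCompat proper
    exact ⟨⟨⟨σ, hσ.oriAcyclic, hσ.oriSMulEq (hc.symm ▸ hσ)⟩, c, hc, hσ⟩, rfl⟩

theorem card_fixedBy_properColorings_eq_finsum [Finite V] [Finite C] [LinearOrder C] :
    Nat.card (fixedBy (properColorings Γ hact C) g) =
      ∑ᶠ σ : {σ : GraphOri Γ // oriAcyclic Γ σ ∧ oriSMulEq Γ hact g σ σ},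
        Nat.card {ψ : Quotient (orbitRel (Subgroup.zpowers g) V) → C //
          ∀ a b, quotDirRel Γ g σ.1 a b → ψ a < ψ b} := by
  have := Fintype.ofFinite {σ : GraphOri Γ // oriAcyclic Γ σ ∧ oriSMulEq Γ hact g σ σ}
  simp only [finsum_eq_sum_of_fintype, ← Nat.card_congr (fixedStrictCompatEquivStrictMap g _)]
  rw [← Nat.card_eq_of_bijective _ fixedColoringOfStrictCompat_bijective, Nat.card_sigma]

end FixedColorings

section Kernels

variable {V : Type*}

/-- A function on `V` with kernel `s` is an injective function on the classes of `s`. -/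
def kerEqEquivEmbedding (C : Type*) (s : Setoid V) :
    {c : V → C // Setoid.ker c = s} ≃ (Quotient s ↪ C) :=
  calc
    _ ≃ {c : V → C // s ≤ Setoid.ker c ∧ Setoid.ker c = s} :=
      Equiv.subtypeEquivRight fun _ => ⟨fun h => ⟨h.ge, h⟩, And.right⟩
    _ ≃ {c : {c : V → C // s ≤ Setoid.ker c} // Setoid.ker c.1 = s} :=
      (Equiv.subtypeSubtypeEquivSubtypeInter _ (Setoid.ker · = s)).symm
    _ ≃ {f : Quotient s → C // f.Injective} :=
      (Setoid.liftEquiv s).subtypeEquiv fun c =>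
        (Setoid.lift_injective_iff_ker_eq_of_le c.2).symm
    _ ≃ _ := Equiv.subtypeInjectiveEquivEmbedding _ _

variable [Finite V]

instance finite_setoid : Finite (Setoid V) :=
  Finite.of_injective (fun s : Setoid V => s.r) fun _ _ h => Setoid.ext fun a b =>
    iff_of_eq (congrFun₂ h a b)

theorem card_ker_mem_eq_sum_descFactorial (C : Type*) [Finite C] (S : Finset (Setoid V)) :
    Nat.card {c : V → C // Setoid.ker c ∈ S} =
      ∑ s ∈ S, (Nat.card C).descFactorial (Nat.card (Quotient s)) := by
  have card_ker_eq (s : Setoid V) : Nat.card {c : V → C // Setoid.ker c = s} =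
      (Nat.card C).descFactorial (Nat.card (Quotient s)) := by
    have := Fintype.ofFinite C
    have := Fintype.ofFinite (Quotient s)
    simp only [Nat.card_congr (kerEqEquivEmbedding C s), Nat.card_eq_fintype_card,
      Fintype.card_embedding_eq]
  rw [← Nat.card_congr (Equiv.sigmaSubtypeFiberEquivSubtype Setoid.ker fun _ => Iff.rfl),
    Nat.card_sigma]
  simp only [card_ker_eq]
  exact S.sum_coe_sort fun s => (Nat.card C).descFactorial (Nat.card (Quotient s))

theorem natCard_quotient_le (s : Setoid V) : Nat.card (Quotient s) ≤ Nat.card V :=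
  Nat.card_le_card_of_surjective _ Quotient.mk_surjective

theorem natCard_quotient_eq_iff_eq_bot {s : Setoid V} :
    Nat.card (Quotient s) = Nat.card V ↔ s = ⊥ := by
  constructor
  · intro h
    rw [← Setoid.ker_mk_eq s, Setoid.ker_eq_bot_iff]
    exact (Quotient.mk''_surjective.bijective_of_nat_card_le h.ge).injective
  · rintro rfl
    exact Nat.card_congr Setoid.quotientBotEquiv

variable (R : Type*) [Ring R]

/-- The polynomial whose value at `n` is the number of functions from `V` to an `n`-element set
with kernel in `S`. -/
noncomputable def kerPolynomial (S : Finset (Setoid V)) : R[X] :=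
  ∑ s ∈ S, descPochhammer R (Nat.card (Quotient s))

theorem eval_kerPolynomial (S : Finset (Setoid V)) (n : ℕ) :
    (kerPolynomial R S).eval (n : R) = Nat.card {c : V → Fin n // Setoid.ker c ∈ S} := by
  simp only [kerPolynomial, eval_finsetSum, descPochhammer_eval_eq_descFactorial,
    card_ker_mem_eq_sum_descFactorial, Nat.card_fin, Nat.cast_sum]

variable [NoZeroDivisors R] [Nontrivial R]

theorem natDegree_kerPolynomial_le (S : Finset (Setoid V)) :
    (kerPolynomial R S).natDegree ≤ Nat.card V :=
  natDegree_sum_le_of_forall_le _ _ fun s _ =>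
    (descPochhammer_natDegree R _).trans_le (natCard_quotient_le s)

open scoped Classical in
theorem coeff_card_kerPolynomial (S : Finset (Setoid V)) :
    (kerPolynomial R S).coeff (Nat.card V) = if ⊥ ∈ S then 1 else 0 := by
  have coeff_card (s : Setoid V) :
      (descPochhammer R (Nat.card (Quotient s))).coeff (Nat.card V) = if s = ⊥ then 1 else 0 := by
    rcases (natCard_quotient_le s).lt_or_eq with h | h
    · rw [if_neg (mt natCard_quotient_eq_iff_eq_bot.mpr h.ne),
        coeff_eq_zero_of_natDegree_lt (by rwa [descPochhammer_natDegree])]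
    · rw [if_pos (natCard_quotient_eq_iff_eq_bot.mp h), h]
      simpa only [descPochhammer_natDegree] using
        (monic_descPochhammer R (Nat.card V)).coeff_natDegree
  simp only [kerPolynomial, finsetSum_coeff, coeff_card, Finset.sum_ite_eq']

end Kernels

section OrbitalChromaticPolynomial

variable {V G : Type*} [Finite V] [Group G] [MulAction G V] (Γ : SimpleGraph V)

/-- The partitions of `V` into independent sets of `Γ` that are unions of `⟨g⟩`-orbits: the
kernels of the proper colorings of `Γ` fixed by `g`. -/
noncomputable def fixedStablePartitions (g : G) : Finset (Setoid V) :=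
  (Set.toFinite {s : Setoid V |
    (∀ u v, Γ.Adj u v → ¬ s u v) ∧ orbitRel (Subgroup.zpowers g) V ≤ s}).toFinset

variable {Γ}

theorem ker_mem_fixedStablePartitions_iff {C : Type*} {g : G} {c : V → C} :
    Setoid.ker c ∈ fixedStablePartitions Γ g ↔
      (∀ u v, Γ.Adj u v → c u ≠ c v) ∧ c ∈ fixedBy (V → C) g := by
  rw [mem_fixedBy_iff_orbitRel_zpowers_le_ker, fixedStablePartitions, Set.Finite.mem_toFinset]
  exact Iff.rfl

theorem bot_mem_fixedStablePartitions_one : ⊥ ∈ fixedStablePartitions Γ (1 : G) := by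
  rw [← Setoid.ker_eq_bot_iff.mpr Function.injective_id, ker_mem_fixedStablePartitions_iff]
  exact ⟨fun _ _ => SimpleGraph.Adj.ne, one_smul G (id : V → V)⟩

theorem card_fixedBy_properColorings_eq_card_ker_mem {C : Type*}
    {hact : ∀ (g : G) (u v : V), Γ.Adj u v → Γ.Adj (g • u) (g • v)} (g : G) :
    Nat.card (fixedBy (properColorings Γ hact C) g) =
      Nat.card {c : V → C // Setoid.ker c ∈ fixedStablePartitions Γ g} :=
  Nat.card_congr <| calc
    _ ≃ {c : properColorings Γ hact C // c.1 ∈ fixedBy (V → C) g} :=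
      Equiv.subtypeEquivRight fun _ => mem_fixedBy_properColorings
    _ ≃ {c : V → C // (∀ u v, Γ.Adj u v → c u ≠ c v) ∧ c ∈ fixedBy (V → C) g} :=
      Equiv.subtypeSubtypeEquivSubtypeInter _ (· ∈ fixedBy (V → C) g)
    _ ≃ _ := Equiv.subtypeEquivRight fun _ => ker_mem_fixedStablePartitions_iff.symm

variable (G Γ) [Fintype G]

/-- The orbital chromatic polynomial `χ_{Γ,G}`, as the average over `g ∈ G` of the polynomials
counting the proper colorings fixed by `g`. -/
noncomputable def orbitalChromaticPolynomial : ℚ[X] :=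
  Polynomial.C (Fintype.card G : ℚ)⁻¹ * ∑ g : G, kerPolynomial ℚ (fixedStablePartitions Γ g)

theorem eval_orbitalChromaticPolynomial
    (hact : ∀ (g : G) (u v : V), Γ.Adj u v → Γ.Adj (g • u) (g • v)) (n : ℕ) :
    (orbitalChromaticPolynomial G Γ).eval (n : ℚ) =
      Nat.card (orbitRel.Quotient G (properColorings Γ hact (Fin n))) := by
  simp only [orbitalChromaticPolynomial, eval_mul, eval_C, eval_finsetSum, eval_kerPolynomial,
    card_orbits_eq_inv_mul_sum_card_fixedBy, card_fixedBy_properColorings_eq_card_ker_mem]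

theorem degree_orbitalChromaticPolynomial :
    (orbitalChromaticPolynomial G Γ).degree = Nat.card V := by
  classical
  rw [orbitalChromaticPolynomial,
    degree_C_mul (inv_ne_zero (Nat.cast_ne_zero.mpr Fintype.card_ne_zero))]
  refine degree_eq_of_le_of_coeff_ne_zero (natDegree_le_iff_degree_le.mp ?_) ?_
  · exact natDegree_sum_le_of_forall_le _ _ fun g _ => natDegree_kerPolynomial_le ℚ _
  · simp only [finsetSum_coeff, coeff_card_kerPolynomial]
    refine (Finset.sum_pos' (fun g _ => by positivity) ⟨1, Finset.mem_univ _, ?_⟩).ne'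
    rw [if_pos (bot_mem_fixedStablePartitions_one)]
    exact one_pos

end OrbitalChromaticPolynomial

/-- Let `Γ` be a finite simple graph and `G` a finite group acting on
`Γ` by automorphisms.  For all `n ≥ 1`, the number of `G`-orbits of proper `n`-colorings
satisfies `χ_{Γ,G}(n) = |Col_n(Γ)/G| = (1/|G|) · Σ_{g∈G} Σ_{σ∈Σ^g} Ω°_{Γ^σ_g}(n)`, where
the inner sum ranges over the acyclic orientations of `Γ` fixed by `g` and
`Ω°_{Γ^σ_g}(n)` counts the strictly order preserving maps from the quotient poset
`Γ^σ_g` to `[n]`.  In particular, `χ_{Γ,G}` agrees for all `n ≥ 1` with a polynomial of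
degree `|V|`. -/
theorem stmt_12 {V G : Type*} [Fintype V] [DecidableEq V] [Group G] [Fintype G]
    [MulAction G V] (Γ : SimpleGraph V)
    (hact : ∀ (g : G) (u v : V), Γ.Adj u v → Γ.Adj (g • u) (g • v)) :
    (∀ n : ℕ, 1 ≤ n →
      (Nat.card (Quot (fun c c' : {c : V → Fin n // ∀ u v : V, Γ.Adj u v → c u ≠ c v} =>
          ∃ g : G, ∀ x : V, c'.1 x = c.1 (g⁻¹ • x))) : ℚ) =
        (Fintype.card G : ℚ)⁻¹ * ∑ g : G,
          ∑ᶠ σ : {σ : GraphOri Γ // oriAcyclic Γ σ ∧ oriSMulEq Γ hact g σ σ},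
            (Nat.card {ψ : Quotient (MulAction.orbitRel (Subgroup.zpowers g) V) → Fin n //
              ∀ a b, quotDirRel Γ g σ.1 a b → ψ a < ψ b} : ℚ)) ∧
    ∃ p : Polynomial ℚ, p.degree = (Fintype.card V : WithBot ℕ) ∧
      ∀ n : ℕ, 1 ≤ n →
        p.eval (n : ℚ) =
          Nat.card (Quot (fun c c' : {c : V → Fin n // ∀ u v : V, Γ.Adj u v → c u ≠ c v} =>
            ∃ g : G, ∀ x : V, c'.1 x = c.1 (g⁻¹ • x))) := by
  refine ⟨fun n _ => ?_, orbitalChromaticPolynomial G Γ, ?_, fun n _ => ?_⟩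
  · rw [card_quot_properColorings hact, card_orbits_eq_inv_mul_sum_card_fixedBy ℚ]
    simp only [card_fixedBy_properColorings_eq_finsum, Nat.cast_finsum]
  · rw [degree_orbitalChromaticPolynomial, Nat.card_eq_fintype_card]
  · rw [card_quot_properColorings hact, eval_orbitalChromaticPolynomial G Γ hact]
end
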